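/- arXiv:1706.05828 — 7 statements merged into one kernel-verified Lean document; each statement's English description precedes it below -/
import Mathlib

section
/- If the block matrix Π = [[Q, S],[Sᵀ, R]] (with Q, R symmetric) is positive semidefinite, then S R† R = S and Sᵀ Q† Q = Sᵀ, where R† and Q† are the Moore–Penrose pseudoinverses of R and Q respectively. -/
/-!
Let `Π = [[Q, S], [T, R]]` be positive semidefinite; being Hermitian, it has `T = Sᴴ`. If `R x = 0`,
then `(0, x)` is isotropic for `Π`, hence lies in its kernel, and the first block row gives
`S x = 0`. Thus `ker R ⊆ ker S`. If `R G R = R`, for instance with `G = R†`, then every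
`x - G R x` lies in `ker R`, so `S x = S G R x`. The identity for `Q` is the same statement with
the blocks swapped.
-/

open Matrix

section GeneralizedInverse

variable {α ι κ μ : Type*} [Ring α] [Fintype ι] [Fintype κ]

theorem mulVec_sub_generalizedInverse_mul_mulVec {R : Matrix ι κ α} {G : Matrix κ ι α}
    (hG : R * G * R = R) (x : κ → α) : R *ᵥ (x - (G * R) *ᵥ x) = 0 := by
  rw [mulVec_sub, mulVec_mulVec, ← Matrix.mul_assoc, hG, sub_self]

theorem mul_generalizedInverse_mul_of_forall_mulVec_eq_zero {R : Matrix ι κ α} {G : Matrix κ ι α}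
    {S : Matrix μ κ α} (hG : R * G * R = R) (hker : ∀ x, R *ᵥ x = 0 → S *ᵥ x = 0) :
    S * G * R = S := by
  refine ext_iff_mulVec.mpr fun x => ?_
  have hSx : S *ᵥ (x - (G * R) *ᵥ x) = 0 :=
    hker _ (mulVec_sub_generalizedInverse_mul_mulVec hG x)
  rw [mulVec_sub, mulVec_mulVec, ← Matrix.mul_assoc, sub_eq_zero] at hSx
  exact hSx.symm

end GeneralizedInverse

theorem posSemidef_fromBlocks_swap {𝕜 ι κ : Type*} [Ring 𝕜] [PartialOrder 𝕜] [StarRing 𝕜]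
    {Q : Matrix ι ι 𝕜} {S : Matrix ι κ 𝕜} {T : Matrix κ ι 𝕜} {R : Matrix κ κ 𝕜}
    (h : (fromBlocks Q S T R).PosSemidef) : (fromBlocks R T S Q).PosSemidef := by
  rw [← fromBlocks_submatrix_sum_swap_sum_swap]
  exact h.submatrix Sum.swap

section PosSemidef

open scoped ComplexOrder

variable {𝕜 ι κ : Type*} [RCLike 𝕜] [Fintype κ]
  {Q : Matrix ι ι 𝕜} {S : Matrix ι κ 𝕜} {T : Matrix κ ι 𝕜} {R : Matrix κ κ 𝕜}

theorem mulVec_eq_zero_of_posSemidef_fromBlocks [Finite ι]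
    (h : (fromBlocks Q S T R).PosSemidef) {x : κ → 𝕜} (hx : R *ᵥ x = 0) : S *ᵥ x = 0 := by
  cases nonempty_fintype ι
  have hmul : fromBlocks Q S T R *ᵥ Sum.elim 0 x = Sum.elim (S *ᵥ x) 0 := by
    simp [fromBlocks_mulVec, hx]
  have hisotropic :
      star (Sum.elim (0 : ι → 𝕜) x) ⬝ᵥ fromBlocks Q S T R *ᵥ Sum.elim 0 x = 0 := by
    simp [hmul, dotProduct]
  have hker : Sum.elim (S *ᵥ x) (0 : κ → 𝕜) = 0 :=
    hmul ▸ (h.dotProduct_mulVec_zero_iff _).mp hisotropic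
  exact congrArg (· ∘ Sum.inl) hker

theorem mul_generalizedInverse_mul_of_posSemidef_fromBlocks [Finite ι]
    {G : Matrix κ κ 𝕜} (h : (fromBlocks Q S T R).PosSemidef) (hG : R * G * R = R) :
    S * G * R = S :=
  mul_generalizedInverse_mul_of_forall_mulVec_eq_zero hG fun _ =>
    mulVec_eq_zero_of_posSemidef_fromBlocks h

theorem stmt_1_general [Fintype ι] {G : Matrix κ κ 𝕜} {H : Matrix ι ι 𝕜}
    (h : (fromBlocks Q S T R).PosSemidef) (hG : R * G * R = R) (hH : Q * H * Q = Q) :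
    S * G * R = S ∧ T * H * Q = T :=
  ⟨mul_generalizedInverse_mul_of_posSemidef_fromBlocks h hG,
    mul_generalizedInverse_mul_of_posSemidef_fromBlocks (posSemidef_fromBlocks_swap h) hH⟩

end PosSemidef

theorem stmt_1 (n m : ℕ) (hn : 0 < n) (hm : 0 < m)
    (Q : Matrix (Fin n) (Fin n) ℝ) (R : Matrix (Fin m) (Fin m) ℝ)
    (S : Matrix (Fin n) (Fin m) ℝ)
    (hQ : Qᵀ = Q) (hR : Rᵀ = R)
    (Rd : Matrix (Fin m) (Fin m) ℝ)
    (hRd1 : R * Rd * R = R) (hRd2 : Rd * R * Rd = Rd)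
    (hRd3 : (R * Rd)ᵀ = R * Rd) (hRd4 : (Rd * R)ᵀ = Rd * R)
    (Qd : Matrix (Fin n) (Fin n) ℝ)
    (hQd1 : Q * Qd * Q = Q) (hQd2 : Qd * Q * Qd = Qd)
    (hQd3 : (Q * Qd)ᵀ = Q * Qd) (hQd4 : (Qd * Q)ᵀ = Qd * Q)
    (hPi : (Matrix.fromBlocks Q S Sᵀ R).PosSemidef) :
    S * Rd * R = S ∧ Sᵀ * Qd * Q = Sᵀ :=
  stmt_1_general hPi hRd1 hQd1
end

section
/- (Popov function identity.) For every symmetric X ∈ ℝ^{n×n} and every s ∈ ℂ such that s I_n − A and −s I_n − Aᵀ are invertible, one has Bᵀ(−s I_n − Aᵀ)⁻¹ Q_X (s I_n − A)⁻¹ B + Bᵀ(−s I_n − Aᵀ)⁻¹ S_X + S_Xᵀ (s I_n − A)⁻¹ B + R = Bᵀ(−s I_n − Aᵀ)⁻¹ Q (s I_n − A)⁻¹ B + Bᵀ(−s I_n − Aᵀ)⁻¹ S + Sᵀ (s I_n − A)⁻¹ B + R; i.e. the Popov function Φ(s) can be computed with (Q_X, S_X, R) in place of (Q, S, R). -/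
/-!
The Popov function is additive in the triple `(Q, S, R)`, so the claim is that it vanishes on
`(Aᵀ X + X A, X B, 0)`. Put `L = -s I - Aᵀ` and `M = s I - A`. The multiples of `s` cancel in
`L X + X M = -(Aᵀ X + X A)`, so the quadratic term contributes
`-Bᵀ L⁻¹ (L X + X M) M⁻¹ B = -(Bᵀ X M⁻¹ B + Bᵀ L⁻¹ X B)`,
and the cross terms contribute exactly the opposite, because `(X B)ᵀ = Bᵀ X`.
-/

open Matrix

/-- Entrywise embedding of a real matrix into the complex matrices. -/
def cm {α β : Type*} (M : Matrix α β ℝ) : Matrix α β ℂ := M.map Complex.ofReal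

section CommRing

variable {K ι κ : Type*} [CommRing K] [Fintype ι] [DecidableEq ι]

theorem inv_mul_sylvester_mul_inv [Fintype κ] [DecidableEq κ]
    {L : Matrix ι ι K} {M : Matrix κ κ K} (X : Matrix ι κ K)
    (hL : IsUnit L.det) (hM : IsUnit M.det) :
    L⁻¹ * (L * X + X * M) * M⁻¹ = X * M⁻¹ + L⁻¹ * X := by
  rw [Matrix.mul_add, Matrix.add_mul, nonsing_inv_mul_cancel_left _ _ hL, ← Matrix.mul_assoc,
    mul_nonsing_inv_cancel_right _ _ hM]

theorem neg_smul_one_sub_mul_add_mul_smul_one_sub [Fintype κ] [DecidableEq κ]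
    (C : Matrix ι ι K) (A : Matrix κ κ K) (X : Matrix ι κ K) (s : K) :
    ((-s) • 1 - C) * X + X * (s • 1 - A) = -(C * X + X * A) := by
  simp only [Matrix.sub_mul, Matrix.mul_sub, Matrix.smul_mul, Matrix.mul_smul, Matrix.one_mul,
    Matrix.mul_one, neg_smul, Matrix.neg_mul]
  abel

/-- The Popov function `Φ(s)` of the system `(A, B)` with weights `(Q, S, R)`. It uses transposes,
not conjugate transposes, and is meaningful only where both matrices being inverted are invertible,
since the inverse of a singular matrix is `0` by convention. -/
noncomputable def popovFunction (A : Matrix ι ι K) (B : Matrix ι κ K) (Q : Matrix ι ι K)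
    (S : Matrix ι κ K) (R : Matrix κ κ K) (s : K) : Matrix κ κ K :=
  Bᵀ * ((-s) • (1 : Matrix ι ι K) - Aᵀ)⁻¹ * Q * (s • (1 : Matrix ι ι K) - A)⁻¹ * B
    + Bᵀ * ((-s) • (1 : Matrix ι ι K) - Aᵀ)⁻¹ * S
    + Sᵀ * (s • (1 : Matrix ι ι K) - A)⁻¹ * B
    + R

theorem popovFunction_add (A : Matrix ι ι K) (B : Matrix ι κ K) (Q₁ Q₂ : Matrix ι ι K)
    (S₁ S₂ : Matrix ι κ K) (R₁ R₂ : Matrix κ κ K) (s : K) :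
    popovFunction A B (Q₁ + Q₂) (S₁ + S₂) (R₁ + R₂) s =
      popovFunction A B Q₁ S₁ R₁ s + popovFunction A B Q₂ S₂ R₂ s := by
  simp only [popovFunction, transpose_add, Matrix.mul_add, Matrix.add_mul]
  abel

theorem popovFunction_lyapunov_eq_zero (A : Matrix ι ι K) (B : Matrix ι κ K) {X : Matrix ι ι K}
    (hX : X.IsSymm) {s : K} (hA : IsUnit (s • (1 : Matrix ι ι K) - A).det)
    (hAt : IsUnit ((-s) • (1 : Matrix ι ι K) - Aᵀ).det) :
    popovFunction A B (Aᵀ * X + X * A) (X * B) 0 s = 0 := by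
  have lyapunov_eq := neg_smul_one_sub_mul_add_mul_smul_one_sub Aᵀ A X s
  unfold popovFunction
  set L := (-s) • (1 : Matrix ι ι K) - Aᵀ
  set M := s • (1 : Matrix ι ι K) - A
  have quadratic_term :
      Bᵀ * L⁻¹ * (Aᵀ * X + X * A) * M⁻¹ * B = -(Bᵀ * X * M⁻¹ * B + Bᵀ * L⁻¹ * X * B) := calc
    _ = -(Bᵀ * (L⁻¹ * (L * X + X * M) * M⁻¹) * B) := by
      simp only [lyapunov_eq, Matrix.mul_neg, Matrix.neg_mul, neg_neg, Matrix.mul_assoc]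
    _ = _ := by
      rw [inv_mul_sylvester_mul_inv X hAt hA]
      simp only [Matrix.mul_add, Matrix.add_mul, Matrix.mul_assoc]
  rw [quadratic_term, transpose_mul, hX.eq, ← Matrix.mul_assoc]
  abel

theorem stmt_2_general (A Q : Matrix ι ι K) (B S : Matrix ι κ K) (R : Matrix κ κ K)
    {X : Matrix ι ι K} (hX : X.IsSymm) {s : K}
    (hA : IsUnit (s • (1 : Matrix ι ι K) - A).det)
    (hAt : IsUnit ((-s) • (1 : Matrix ι ι K) - Aᵀ).det) :
    popovFunction A B (Q + Aᵀ * X + X * A) (S + X * B) R s = popovFunction A B Q S R s := calc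
  _ = popovFunction A B (Q + (Aᵀ * X + X * A)) (S + X * B) (R + 0) s := by
    rw [add_assoc, add_zero]
  _ = _ := by
    rw [popovFunction_add, popovFunction_lyapunov_eq_zero A B hX hA hAt, add_zero]

end CommRing

section ComplexEmbedding

variable {α β γ : Type*}

theorem cm_add (M N : Matrix α β ℝ) : cm (M + N) = cm M + cm N :=
  Matrix.map_add _ Complex.ofReal_add M N

theorem cm_mul [Fintype β] (M : Matrix α β ℝ) (N : Matrix β γ ℝ) : cm (M * N) = cm M * cm N :=
  Matrix.map_mul (f := Complex.ofRealHom)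

theorem cm_transpose (M : Matrix α β ℝ) : cm Mᵀ = (cm M)ᵀ :=
  rfl

end ComplexEmbedding

theorem stmt_2 (n m : ℕ) (hn : 0 < n) (hm : 0 < m)
    (A Q : Matrix (Fin n) (Fin n) ℝ) (B S : Matrix (Fin n) (Fin m) ℝ)
    (R : Matrix (Fin m) (Fin m) ℝ)
    (X : Matrix (Fin n) (Fin n) ℝ) (hX : Xᵀ = X) (s : ℂ)
    (h1 : IsUnit (s • (1 : Matrix (Fin n) (Fin n) ℂ) - cm A).det)
    (h2 : IsUnit ((-s) • (1 : Matrix (Fin n) (Fin n) ℂ) - (cm A)ᵀ).det) :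
    (cm B)ᵀ * ((-s) • (1 : Matrix (Fin n) (Fin n) ℂ) - (cm A)ᵀ)⁻¹ *
        cm (Q + Aᵀ * X + X * A) * (s • (1 : Matrix (Fin n) (Fin n) ℂ) - cm A)⁻¹ * cm B
      + (cm B)ᵀ * ((-s) • (1 : Matrix (Fin n) (Fin n) ℂ) - (cm A)ᵀ)⁻¹ * cm (S + X * B)
      + (cm (S + X * B))ᵀ * (s • (1 : Matrix (Fin n) (Fin n) ℂ) - cm A)⁻¹ * cm B
      + cm R
    = (cm B)ᵀ * ((-s) • (1 : Matrix (Fin n) (Fin n) ℂ) - (cm A)ᵀ)⁻¹ *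
        cm Q * (s • (1 : Matrix (Fin n) (Fin n) ℂ) - cm A)⁻¹ * cm B
      + (cm B)ᵀ * ((-s) • (1 : Matrix (Fin n) (Fin n) ℂ) - (cm A)ᵀ)⁻¹ * cm S
      + (cm S)ᵀ * (s • (1 : Matrix (Fin n) (Fin n) ℂ) - cm A)⁻¹ * cm B
      + cm R := by
  simpa only [popovFunction, cm_add, cm_mul, cm_transpose] using
    stmt_2_general (cm A) (cm Q) (cm B) (cm S) (cm R) (X := cm X) (IsSymm.map hX _) h1 h2
end

section
/- (The subspace 𝓡_{0,X} is output-nulling for C_X.) Let X be a symmetric solution of CGCARE(Σ). Then for every natural number k one has C_X · A_X^k · (B G) = 0; equivalently, the reachable subspace 𝓡_{0,X} = im [ B G | A_X B G | … | A_X^{n−1} B G ] is contained in ker C_X. -/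
open Matrix

/-!
Write `F = A_X`, `H = C_X`, `G = 1 - R† R`. The kernel condition says exactly that the gain `K_X`
solves the normal equation `R K = S_Xᴴ`. Completing the square then turns the Riccati equation into
the closed-loop Lyapunov equation `X F + Fᴴ X + Hᴴ H = 0`. Moreover `D G = 0`, so that
`0 = S_X G = Cᴴ D G + X B G` gives `X B G = 0`.

If `X W = 0`, then `0 = Wᴴ (X F + Fᴴ X + Hᴴ H) W = (H W)ᴴ (H W)`, hence `H W = 0`, and then the
Lyapunov equation applied to `W` gives `X (F W) = 0`. So `ker X` is contained in `ker H` and is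
`F`-invariant; it contains the image of `B G`, hence `H F ^ k B G = 0` for all `k`.
-/

section GeneralizedInverse

variable {𝕜 l m n q : Type*} [Fintype m]

lemma mul_eq_zero_of_mulVec_ker_le [NonUnitalNonAssocSemiring 𝕜] {R : Matrix n m 𝕜}
    {T : Matrix q m 𝕜} (hker : ∀ v, R *ᵥ v = 0 → T *ᵥ v = 0) {G : Matrix m l 𝕜}
    (hRG : R * G = 0) : T * G = 0 := by
  ext i j
  have hRGj : R *ᵥ Gᵀ j = 0 := funext fun i' => congrFun₂ hRG i' j
  exact congrFun (hker _ hRGj) i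

lemma mul_one_sub_generalizedInverse_mul [Ring 𝕜] [Fintype n] [DecidableEq m]
    {R : Matrix n m 𝕜} {Rd : Matrix m n 𝕜} (hRd : R * Rd * R = R) : R * (1 - Rd * R) = 0 := by
  rw [Matrix.mul_sub, Matrix.mul_one, ← Matrix.mul_assoc, hRd, sub_self]

lemma mul_generalizedInverse_mul_conjTranspose_of_mulVec_ker_le [Ring 𝕜] [StarRing 𝕜]
    {R Rd : Matrix m m 𝕜} (hR : R.IsHermitian) (hRd : R * Rd * R = R) {T : Matrix q m 𝕜}
    (hker : ∀ v, R *ᵥ v = 0 → T *ᵥ v = 0) : R * (Rd * Tᴴ) = Tᴴ := by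
  classical
  have hT : T = T * (Rd * R) := by
    have hTG := mul_eq_zero_of_mulVec_ker_le hker (mul_one_sub_generalizedInverse_mul hRd)
    rwa [Matrix.mul_sub, Matrix.mul_one, sub_eq_zero] at hTG
  have hTstar : Tᴴ = R * (Rdᴴ * Tᴴ) := by
    conv_lhs => rw [hT, conjTranspose_mul, conjTranspose_mul, hR.eq, Matrix.mul_assoc]
  calc R * (Rd * Tᴴ) = R * Rd * R * (Rdᴴ * Tᴴ) := by
        conv_lhs => rw [hTstar]
        simp only [Matrix.mul_assoc]
    _ = Tᴴ := by rw [hRd, ← hTstar]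

end GeneralizedInverse

section Riccati

variable {𝕜 n m p : Type*} [Ring 𝕜] [StarRing 𝕜] [Fintype n] [Fintype m] [Fintype p]
  {A X : Matrix n n 𝕜} {B : Matrix n m 𝕜} {C : Matrix p n 𝕜} {D : Matrix p m 𝕜}
  {K : Matrix m n 𝕜}

lemma closedLoop_lyapunov_of_riccati (hX : X.IsHermitian)
    (hK : Dᴴ * D * K = (Cᴴ * D + X * B)ᴴ)
    (hRiccati : X * A + Aᴴ * X + Cᴴ * C = (Cᴴ * D + X * B) * K) :
    X * (A - B * K) + (A - B * K)ᴴ * X + (C - D * K)ᴴ * (C - D * K) = 0 := by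
  have completeSquare :
      X * (A - B * K) + (A - B * K)ᴴ * X + (C - D * K)ᴴ * (C - D * K) =
        X * A + Aᴴ * X + Cᴴ * C - (Cᴴ * D + X * B) * K
          + Kᴴ * (Dᴴ * D * K - (Cᴴ * D + X * B)ᴴ) := by
    simp only [conjTranspose_sub, conjTranspose_add, conjTranspose_mul,
      conjTranspose_conjTranspose, hX.eq, Matrix.mul_sub, Matrix.sub_mul, Matrix.add_mul,
      Matrix.mul_add, Matrix.mul_assoc]
    abel
  rw [completeSquare, hK, hRiccati, sub_self, sub_self, Matrix.mul_zero, add_zero]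

lemma mul_input_mul_eq_zero_of_normalEquation {q : Type*} {G : Matrix m q 𝕜}
    (hK : Dᴴ * D * K = (Cᴴ * D + X * B)ᴴ) (hDG : D * G = 0) : X * (B * G) = 0 := by
  have hT : Cᴴ * D + X * B = Kᴴ * Dᴴ * D := by
    rw [← conjTranspose_conjTranspose (Cᴴ * D + X * B), ← hK]
    simp only [conjTranspose_mul, conjTranspose_conjTranspose, Matrix.mul_assoc]
  have hTG := congrArg (· * G) hT
  simpa only [Matrix.add_mul, Matrix.mul_assoc, hDG, Matrix.mul_zero, zero_add] using hTG

end Riccati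

section Lyapunov

variable {𝕜 n m p q : Type*} [Ring 𝕜] [PartialOrder 𝕜] [StarRing 𝕜] [StarOrderedRing 𝕜]
  [NoZeroDivisors 𝕜] [Fintype n] [Fintype p]
  {X F : Matrix n n 𝕜} {H : Matrix p n 𝕜} {W : Matrix n q 𝕜}

lemma output_mul_eq_zero_of_lyapunov (hX : X.IsHermitian)
    (hLyapunov : X * F + Fᴴ * X + Hᴴ * H = 0) (hXW : X * W = 0) : H * W = 0 := by
  have hWX : Wᴴ * X = 0 := by
    rw [← hX.eq, ← conjTranspose_mul, hXW, conjTranspose_zero]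
  rw [← conjTranspose_mul_self_eq_zero]
  calc (H * W)ᴴ * (H * W)
      = Wᴴ * (X * F + Fᴴ * X + Hᴴ * H) * W - Wᴴ * X * (F * W) - Wᴴ * Fᴴ * (X * W) := by
        simp only [conjTranspose_mul, Matrix.mul_add, Matrix.add_mul, Matrix.mul_assoc]
        abel
    _ = 0 := by
        simp only [hLyapunov, hWX, hXW, Matrix.mul_zero, Matrix.zero_mul, sub_zero]

lemma mul_mul_eq_zero_of_lyapunov (hX : X.IsHermitian)
    (hLyapunov : X * F + Fᴴ * X + Hᴴ * H = 0) (hXW : X * W = 0) : X * (F * W) = 0 := by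
  have hHW := output_mul_eq_zero_of_lyapunov hX hLyapunov hXW
  simpa only [Matrix.add_mul, Matrix.mul_assoc, hXW, hHW, Matrix.mul_zero, Matrix.zero_mul,
    add_zero] using congrArg (· * W) hLyapunov

lemma output_mul_pow_mul_eq_zero_of_lyapunov [DecidableEq n] (hX : X.IsHermitian)
    (hLyapunov : X * F + Fᴴ * X + Hᴴ * H = 0) (hXW : X * W = 0) (k : ℕ) :
    H * F ^ k * W = 0 := by
  have hXpow : X * (F ^ k * W) = 0 := by
    induction k with
    | zero => rwa [pow_zero, Matrix.one_mul]
    | succ k ih =>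
      rw [pow_succ', Matrix.mul_assoc]
      exact mul_mul_eq_zero_of_lyapunov hX hLyapunov ih
  rw [Matrix.mul_assoc]
  exact output_mul_eq_zero_of_lyapunov hX hLyapunov hXpow

end Lyapunov

theorem stmt_9_general {𝕜 n m p : Type*} [Ring 𝕜] [PartialOrder 𝕜] [StarRing 𝕜]
    [StarOrderedRing 𝕜] [NoZeroDivisors 𝕜] [Fintype n] [DecidableEq n] [Fintype m]
    [DecidableEq m] [Fintype p]
    {A Q : Matrix n n 𝕜} {B S : Matrix n m 𝕜} {R : Matrix m m 𝕜}
    {C : Matrix p n 𝕜} {D : Matrix p m 𝕜}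
    (hQ : Q = Cᴴ * C) (hS : S = Cᴴ * D) (hR : R = Dᴴ * D)
    {Rd : Matrix m m 𝕜} (hRd : R * Rd * R = R) {X : Matrix n n 𝕜} (hX : X.IsHermitian)
    (hgcare : X * A + Aᴴ * X - (S + X * B) * Rd * (S + X * B)ᴴ + Q = 0)
    (hker : ∀ v, R *ᵥ v = 0 → (S + X * B) *ᵥ v = 0) (k : ℕ) :
    (C - D * (Rd * (S + X * B)ᴴ)) * (A - B * (Rd * (S + X * B)ᴴ)) ^ k *
      (B * (1 - Rd * R)) = 0 := by
  subst hQ hS hR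
  have hK := mul_generalizedInverse_mul_conjTranspose_of_mulVec_ker_le
    (isHermitian_conjTranspose_mul_self D) hRd hker
  have hRiccati : X * A + Aᴴ * X + Cᴴ * C =
      (Cᴴ * D + X * B) * (Rd * (Cᴴ * D + X * B)ᴴ) := by
    rwa [← Matrix.mul_assoc, ← sub_eq_zero, ← sub_add_eq_add_sub]
  have hDG : D * (1 - Rd * (Dᴴ * D)) = 0 :=
    (conjTranspose_mul_self_mul_eq_zero _ _).1 (mul_one_sub_generalizedInverse_mul hRd)
  exact output_mul_pow_mul_eq_zero_of_lyapunov hX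
    (closedLoop_lyapunov_of_riccati hX hK hRiccati)
    (mul_input_mul_eq_zero_of_normalEquation hK hDG) k

theorem stmt_9 (n m p : ℕ) (hn : 0 < n) (hm : 0 < m) (hp : 0 < p)
    (A Q : Matrix (Fin n) (Fin n) ℝ) (B S : Matrix (Fin n) (Fin m) ℝ)
    (R : Matrix (Fin m) (Fin m) ℝ)
    (hPi : (Matrix.fromBlocks Q S Sᵀ R).PosSemidef)
    (C : Matrix (Fin p) (Fin n) ℝ) (D : Matrix (Fin p) (Fin m) ℝ)
    (hQ : Q = Cᵀ * C) (hS : S = Cᵀ * D) (hR : R = Dᵀ * D)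
    (Rd : Matrix (Fin m) (Fin m) ℝ)
    (hRd1 : R * Rd * R = R) (hRd2 : Rd * R * Rd = Rd)
    (hRd3 : (R * Rd)ᵀ = R * Rd) (hRd4 : (Rd * R)ᵀ = Rd * R)
    (X : Matrix (Fin n) (Fin n) ℝ) (hX : Xᵀ = X)
    (hgcare : X * A + Aᵀ * X - (S + X * B) * Rd * (S + X * B)ᵀ + Q = 0)
    (hker : ∀ v : Fin m → ℝ, R.mulVec v = 0 → (S + X * B).mulVec v = 0) :
    ∀ k : ℕ,
      (C - D * (Rd * (S + X * B)ᵀ)) * (A - B * (Rd * (S + X * B)ᵀ)) ^ k *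
        (B * ((1 : Matrix (Fin m) (Fin m) ℝ) - Rd * R)) = 0 := by
  simp only [← conjTranspose_eq_transpose_of_trivial] at hQ hS hR hX hgcare ⊢
  exact stmt_9_general hQ hS hR hRd1 hX hgcare hker
end

section
/- (ker X is an output-nulling subspace.) Let X be a symmetric solution of GCARE(Σ). Then for every ξ ∈ ℝ^n with X ξ = 0 one has C_X ξ = 0 and X (A_X ξ) = 0; i.e. ker X is A_X-invariant and contained in ker C_X, so ker X is an output-nulling subspace of the quadruple (A, B, C, D) with friend −K_X. -/
/-!
If `G` is an inner inverse of `R = Dᴴ D`, then `P = D G Dᴴ` is the orthogonal projection onto the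
range of `D`. For `ξ ∈ ker X` one has `S_Xᴴ ξ = Dᴴ C ξ`, hence `C_X ξ = (C - P C) ξ`. The Riccati
equation reads `X A_X + Cᴴ C_X = -Aᴴ X`, so at `ξ` it becomes `X A_X ξ + Mᴴ M ξ = 0` with
`M = C - P C`. Pairing with `ξ`, which is orthogonal to the range of `X`, leaves `‖M ξ‖² = 0`.
-/

open Matrix

section

variable {𝕜 n m p : Type*} [Fintype m] [Fintype p] [NonUnitalRing 𝕜] [StarRing 𝕜]

lemma conjTranspose_mul_sub_mul_of_isStarProjection {P : Matrix p p 𝕜} (hP : IsStarProjection P)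
    (C : Matrix p n 𝕜) : Cᴴ * (C - P * C) = (C - P * C)ᴴ * (C - P * C) := by
  have hPC : P * (C - P * C) = 0 := by
    rw [Matrix.mul_sub, ← Matrix.mul_assoc, hP.isIdempotentElem.eq, sub_self]
  have hPH : Pᴴ = P := hP.isSelfAdjoint
  rw [conjTranspose_sub, conjTranspose_mul, hPH, Matrix.sub_mul, Matrix.mul_assoc, hPC,
    Matrix.mul_zero, sub_zero]

variable [Fintype n]

/-- The feedback gain `K_X = G (Cᴴ D + X B)ᴴ` attached to `X`. In the Riccati equation `G` is the
pseudoinverse of `Dᴴ D`; as a formula the gain makes sense for every `G`. -/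
def riccatiGain (B : Matrix n m 𝕜) (C : Matrix p n 𝕜) (D : Matrix p m 𝕜) (G : Matrix m m 𝕜)
    (X : Matrix n n 𝕜) : Matrix m n 𝕜 :=
  G * (Cᴴ * D + X * B)ᴴ

lemma sub_mul_riccatiGain_mulVec_of_mulVec_eq_zero {X : Matrix n n 𝕜} (hX : X.IsHermitian)
    (B : Matrix n m 𝕜) (C : Matrix p n 𝕜) (D : Matrix p m 𝕜) (G : Matrix m m 𝕜) {ξ : n → 𝕜}
    (hξ : X *ᵥ ξ = 0) :
    (C - D * riccatiGain B C D G X) *ᵥ ξ = (C - D * G * Dᴴ * C) *ᵥ ξ := by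
  simp only [riccatiGain, conjTranspose_add, conjTranspose_mul, conjTranspose_conjTranspose, hX.eq,
    sub_mulVec, add_mulVec, ← mulVec_mulVec, hξ, mulVec_zero, add_zero]

lemma mul_closedLoop_add_conjTranspose_mul_output {A X : Matrix n n 𝕜} {B : Matrix n m 𝕜}
    {C : Matrix p n 𝕜} {D : Matrix p m 𝕜} {K : Matrix m n 𝕜}
    (hric : X * A + Aᴴ * X - (Cᴴ * D + X * B) * K + Cᴴ * C = 0) :
    X * (A - B * K) + Cᴴ * (C - D * K) = -(Aᴴ * X) := by
  rw [eq_neg_iff_add_eq_zero, ← hric]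
  simp only [Matrix.mul_sub, Matrix.add_mul, Matrix.mul_assoc]
  abel

variable [PartialOrder 𝕜] [StarOrderedRing 𝕜] [NoZeroDivisors 𝕜]

lemma mul_mul_conjTranspose_mul_self {D : Matrix p m 𝕜} {G : Matrix m m 𝕜}
    (hG : Dᴴ * D * G * (Dᴴ * D) = Dᴴ * D) : D * G * Dᴴ * D = D := by
  have hDH : Dᴴ * (D * G * Dᴴ * D - D) = 0 := by
    simpa only [Matrix.mul_sub, Matrix.mul_assoc, sub_eq_zero] using hG
  rw [← sub_eq_zero, ← conjTranspose_mul_self_eq_zero]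
  calc (D * G * Dᴴ * D - D)ᴴ * (D * G * Dᴴ * D - D)
      = (D * G * Dᴴ * D)ᴴ * (D * G * Dᴴ * D - D) := by
        rw [conjTranspose_sub, Matrix.sub_mul, hDH, sub_zero]
    _ = Dᴴ * D * Gᴴ * (Dᴴ * (D * G * Dᴴ * D - D)) := by
        simp only [conjTranspose_mul, conjTranspose_conjTranspose, Matrix.mul_assoc]
    _ = 0 := by rw [hDH, Matrix.mul_zero]

lemma isStarProjection_mul_mul_conjTranspose {D : Matrix p m 𝕜} {G : Matrix m m 𝕜}
    (hG : Dᴴ * D * G * (Dᴴ * D) = Dᴴ * D) : IsStarProjection (D * G * Dᴴ) := by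
  have hmul : D * G * Dᴴ * (D * G * Dᴴ)ᴴ = (D * G * Dᴴ)ᴴ := by
    simp only [conjTranspose_mul, conjTranspose_conjTranspose, ← Matrix.mul_assoc,
      mul_mul_conjTranspose_mul_self hG]
  have hself : (D * G * Dᴴ)ᴴ = D * G * Dᴴ := by
    rw [← conjTranspose_inj, ← hmul, isHermitian_mul_conjTranspose_self]
  exact ⟨by rwa [hself] at hmul, hself⟩

lemma mulVec_eq_zero_of_mulVec_add_conjTranspose_mul_self_mulVec_eq_zero {X : Matrix n n 𝕜}
    (hX : X.IsHermitian) {M : Matrix p n 𝕜} {ξ v : n → 𝕜} (hξ : X *ᵥ ξ = 0)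
    (h : X *ᵥ v + (Mᴴ * M) *ᵥ ξ = 0) : M *ᵥ ξ = 0 ∧ X *ᵥ v = 0 := by
  have hξX : star ξ ᵥ* X = 0 := by
    rw [← hX.eq, ← star_mulVec, hξ, star_zero]
  have hM : M *ᵥ ξ = 0 := by
    rw [← dotProduct_star_self_eq_zero]
    calc star (M *ᵥ ξ) ⬝ᵥ M *ᵥ ξ = star ξ ⬝ᵥ (Mᴴ * M) *ᵥ ξ := by
          rw [star_mulVec, ← dotProduct_mulVec, mulVec_mulVec]
      _ = star ξ ⬝ᵥ (X *ᵥ v + (Mᴴ * M) *ᵥ ξ) := by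
          rw [dotProduct_add, dotProduct_mulVec _ X, hξX, zero_dotProduct, zero_add]
      _ = 0 := by rw [h, dotProduct_zero]
  refine ⟨hM, ?_⟩
  simpa only [← mulVec_mulVec, hM, mulVec_zero, add_zero] using h

theorem stmt_12_general {A X : Matrix n n 𝕜} {B : Matrix n m 𝕜} {C : Matrix p n 𝕜}
    {D : Matrix p m 𝕜} {G : Matrix m m 𝕜} (hG : Dᴴ * D * G * (Dᴴ * D) = Dᴴ * D)
    (hX : X.IsHermitian)
    (hric : X * A + Aᴴ * X - (Cᴴ * D + X * B) * riccatiGain B C D G X + Cᴴ * C = 0)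
    {ξ : n → 𝕜} (hξ : X *ᵥ ξ = 0) :
    (C - D * riccatiGain B C D G X) *ᵥ ξ = 0 ∧
      X *ᵥ ((A - B * riccatiGain B C D G X) *ᵥ ξ) = 0 := by
  set K := riccatiGain B C D G X
  set M := C - D * G * Dᴴ * C
  have houtput : (C - D * K) *ᵥ ξ = M *ᵥ ξ :=
    sub_mul_riccatiGain_mulVec_of_mulVec_eq_zero hX B C D G hξ
  have hgram : Cᴴ * M = Mᴴ * M :=
    conjTranspose_mul_sub_mul_of_isStarProjection (isStarProjection_mul_mul_conjTranspose hG) C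
  have hker : X *ᵥ ((A - B * K) *ᵥ ξ) + (Mᴴ * M) *ᵥ ξ = 0 :=
    calc X *ᵥ ((A - B * K) *ᵥ ξ) + (Mᴴ * M) *ᵥ ξ
        = (X * (A - B * K) + Cᴴ * (C - D * K)) *ᵥ ξ := by
          rw [← hgram, add_mulVec, ← mulVec_mulVec, ← mulVec_mulVec, ← mulVec_mulVec, houtput]
      _ = 0 := by
          rw [mul_closedLoop_add_conjTranspose_mul_output hric, neg_mulVec, ← mulVec_mulVec, hξ,
            mulVec_zero, neg_zero]
  rw [houtput]
  exact mulVec_eq_zero_of_mulVec_add_conjTranspose_mul_self_mulVec_eq_zero hX hξ hker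

end

theorem stmt_12 (n m p : ℕ) (hn : 0 < n) (hm : 0 < m) (hp : 0 < p)
    (A Q : Matrix (Fin n) (Fin n) ℝ) (B S : Matrix (Fin n) (Fin m) ℝ)
    (R : Matrix (Fin m) (Fin m) ℝ)
    (hPi : (Matrix.fromBlocks Q S Sᵀ R).PosSemidef)
    (C : Matrix (Fin p) (Fin n) ℝ) (D : Matrix (Fin p) (Fin m) ℝ)
    (hQ : Q = Cᵀ * C) (hS : S = Cᵀ * D) (hR : R = Dᵀ * D)
    (Rd : Matrix (Fin m) (Fin m) ℝ)
    (hRd1 : R * Rd * R = R) (hRd2 : Rd * R * Rd = Rd)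
    (hRd3 : (R * Rd)ᵀ = R * Rd) (hRd4 : (Rd * R)ᵀ = Rd * R)
    (X : Matrix (Fin n) (Fin n) ℝ) (hX : Xᵀ = X)
    (hgcare : X * A + Aᵀ * X - (S + X * B) * Rd * (S + X * B)ᵀ + Q = 0) :
    ∀ ξ : Fin n → ℝ, X.mulVec ξ = 0 →
      (C - D * (Rd * (S + X * B)ᵀ)).mulVec ξ = 0 ∧
      X.mulVec ((A - B * (Rd * (S + X * B)ᵀ)).mulVec ξ) = 0 := by
  intro ξ hξ
  subst hQ hS hR
  rw [Matrix.mul_assoc _ Rd] at hgcare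
  exact stmt_12_general hRd1 hX hgcare hξ
end

section
/- Let X be a symmetric solution of CGCARE(Σ). Then for every natural number k one has X · A_X^k · (B G) = 0; equivalently, X annihilates the reachable subspace 𝓡_{0,X} = im [ B G | A_X B G | … | A_X^{n−1} B G ]. -/
open Matrix

/-!
Write `S_X = S + X B`, `K = R⁻ S_Xᴴ`, `F = A - B K` and `G = 1 - R⁻ R`, where `R⁻` is any
generalized inverse of `R`, that is, `R R⁻ R = R`. Then `R G = 0` forces both `S G = 0`, as the
Popov matrix `Π` is positive semidefinite, and `S_X G = 0`; hence `X B G = 0`. Since `S_X G = 0`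
also gives `R K = S_Xᴴ`, completing the square turns the Riccati inequality into the Lyapunov
inequality `X F + Fᴴ X ≤ -[1; -K]ᴴ Π [1; -K] ≤ 0`. If `X M = 0`, then `P = -(X F + Fᴴ X) ≥ 0`
satisfies `Mᴴ P M = 0`, so `P M = 0`, that is, `X F M = 0`: the kernel of `X` is `F`-invariant.
-/

section Matrices

variable {α l m n p : Type*} [Fintype n]

lemma mul_eq_zero_of_mulVec_eq_zero_imp [NonUnitalNonAssocSemiring α] {R : Matrix m n α}
    {T : Matrix l n α} (hker : ∀ v, R *ᵥ v = 0 → T *ᵥ v = 0) {M : Matrix n p α}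
    (hM : R * M = 0) : T * M = 0 := by
  ext i j
  have hcol : R *ᵥ M.col j = 0 := funext fun k => congrFun₂ hM k j
  exact congrFun (hker _ hcol) i

lemma mul_one_sub_mul_eq_zero [Ring α] [Fintype m] [DecidableEq n] {R : Matrix m n α}
    {Rd : Matrix n m α} (hRd : R * Rd * R = R) : R * (1 - Rd * R) = 0 := by
  rw [Matrix.mul_sub, Matrix.mul_one, ← Matrix.mul_assoc, hRd, sub_self]

lemma mul_mul_conjTranspose_eq_of_mul_one_sub_eq_zero [Ring α] [StarRing α] [DecidableEq n]
    {R Rd : Matrix n n α} (hR : R.IsHermitian) (hRd : R * Rd * R = R) {T : Matrix l n α}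
    (hT : T * (1 - Rd * R) = 0) : R * (Rd * Tᴴ) = Tᴴ := by
  have hT' : T = T * (Rd * R) := by
    rwa [Matrix.mul_sub, Matrix.mul_one, sub_eq_zero] at hT
  have hfactor : Tᴴ = R * (Rdᴴ * Tᴴ) := by
    simpa only [conjTranspose_mul, hR.eq, Matrix.mul_assoc] using congrArg conjTranspose hT'
  calc R * (Rd * Tᴴ) = R * (Rd * (R * (Rdᴴ * Tᴴ))) := by rw [← hfactor]
    _ = R * Rd * R * (Rdᴴ * Tᴴ) := by simp only [Matrix.mul_assoc]
    _ = Tᴴ := by rw [hRd, ← hfactor]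

lemma conjTranspose_fromRows_mul_fromBlocks_mul_fromRows [Semiring α] [StarRing α] [Fintype m]
    (Q : Matrix n n α) (S : Matrix n m α) (T : Matrix m n α) (R : Matrix m m α)
    (M : Matrix n p α) (N : Matrix m p α) :
    (fromRows M N)ᴴ * fromBlocks Q S T R * fromRows M N =
      Mᴴ * (Q * M + S * N) + Nᴴ * (T * M + R * N) := by
  rw [Matrix.mul_assoc, fromBlocks_mul_fromRows,
    conjTranspose_fromRows_eq_fromCols_conjTranspose, fromCols_mul_fromRows]

lemma closedLoop_lyapunov_eq [Ring α] [StarRing α] [Fintype m] [DecidableEq n]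
    {A Q X : Matrix n n α} {B S : Matrix n m α} {R : Matrix m m α} {K : Matrix m n α}
    (hX : X.IsHermitian) (hK : R * K = (S + X * B)ᴴ) :
    X * (A - B * K) + (A - B * K)ᴴ * X =
      X * A + Aᴴ * X - (S + X * B) * K + Q -
        (fromRows (1 : Matrix n n α) (-K))ᴴ * fromBlocks Q S Sᴴ R *
          fromRows (1 : Matrix n n α) (-K) := by
  have hKRK : Kᴴ * (R * K) = Kᴴ * Sᴴ + Kᴴ * (Bᴴ * X) := by
    rw [hK, conjTranspose_add, conjTranspose_mul, hX.eq, Matrix.mul_add]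
  rw [conjTranspose_fromRows_mul_fromBlocks_mul_fromRows]
  simp only [conjTranspose_one, conjTranspose_neg, conjTranspose_sub, conjTranspose_mul,
    Matrix.mul_one, Matrix.one_mul, Matrix.mul_neg, Matrix.neg_mul, Matrix.mul_add, Matrix.add_mul,
    Matrix.mul_sub, Matrix.sub_mul, Matrix.mul_assoc, hKRK]
  abel

end Matrices

section Riccati

open scoped ComplexOrder MatrixOrder

variable {𝕜 m n p : Type*} [RCLike 𝕜] [Fintype m]

lemma conjTranspose_mul_mul_eq_zero_iff_of_posSemidef {P : Matrix m m 𝕜} (hP : P.PosSemidef)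
    {M : Matrix m p 𝕜} : Mᴴ * P * M = 0 ↔ P * M = 0 := by
  rw [Matrix.mul_assoc]
  refine ⟨fun h => ?_, fun h => by rw [h, Matrix.mul_zero]⟩
  ext i j
  have hquad : star (M.col j) ⬝ᵥ P *ᵥ M.col j = 0 := congrFun₂ h j j
  exact congrFun ((hP.dotProduct_mulVec_zero_iff _).1 hquad) i

lemma mul_eq_zero_of_fromBlocks_posSemidef [Finite n] {Q : Matrix n n 𝕜} {S : Matrix n m 𝕜}
    {R : Matrix m m 𝕜} (hPi : (fromBlocks Q S Sᴴ R).PosSemidef) {M : Matrix m p 𝕜}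
    (hM : R * M = 0) : S * M = 0 := by
  cases nonempty_fintype n
  let N : Matrix (n ⊕ m) p 𝕜 := fromRows 0 M
  have hquad : Nᴴ * fromBlocks Q S Sᴴ R * N = 0 := by
    simp only [N, conjTranspose_fromRows_mul_fromBlocks_mul_fromRows, hM, conjTranspose_zero,
      Matrix.zero_mul, Matrix.mul_zero, add_zero]
  rw [conjTranspose_mul_mul_eq_zero_iff_of_posSemidef hPi, fromBlocks_mul_fromRows, hM,
    Matrix.mul_zero, zero_add, ← fromRows_zero] at hquad
  exact (fromRows_inj hquad).1

variable [Fintype n]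

lemma mul_mul_eq_zero_of_lyapunov_le_zero {X F : Matrix n n 𝕜} (hX : X.IsHermitian)
    (hlyap : X * F + Fᴴ * X ≤ 0) {M : Matrix n p 𝕜} (hM : X * M = 0) : X * (F * M) = 0 := by
  have hMX : Mᴴ * X = 0 := by
    simpa only [conjTranspose_mul, hX.eq, conjTranspose_zero] using congrArg conjTranspose hM
  have hP : (-(X * F + Fᴴ * X)).PosSemidef := (neg_nonneg.2 hlyap).posSemidef
  have hPM : -(X * F + Fᴴ * X) * M = -(X * (F * M)) := by
    simp only [Matrix.neg_mul, Matrix.add_mul, Matrix.mul_assoc, hM, Matrix.mul_zero, add_zero]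
  have hquad : Mᴴ * -(X * F + Fᴴ * X) * M = 0 := by
    rw [Matrix.mul_assoc, hPM, Matrix.mul_neg, ← Matrix.mul_assoc, hMX, Matrix.zero_mul, neg_zero]
  rwa [conjTranspose_mul_mul_eq_zero_iff_of_posSemidef hP, hPM, neg_eq_zero] at hquad

lemma mul_pow_mul_eq_zero_of_lyapunov_le_zero [DecidableEq n] {X F : Matrix n n 𝕜}
    (hX : X.IsHermitian) (hlyap : X * F + Fᴴ * X ≤ 0) {M : Matrix n p 𝕜} (hM : X * M = 0) (k : ℕ) :
    X * F ^ k * M = 0 := by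
  rw [Matrix.mul_assoc]
  induction k with
  | zero => rwa [pow_zero, Matrix.one_mul]
  | succ k ih =>
    rw [pow_succ', Matrix.mul_assoc]
    exact mul_mul_eq_zero_of_lyapunov_le_zero hX hlyap ih

lemma closedLoop_lyapunov_le_zero {A Q X : Matrix n n 𝕜} {B S : Matrix n m 𝕜}
    {R : Matrix m m 𝕜} {K : Matrix m n 𝕜} (hPi : (fromBlocks Q S Sᴴ R).PosSemidef)
    (hX : X.IsHermitian) (hK : R * K = (S + X * B)ᴴ)
    (hric : X * A + Aᴴ * X - (S + X * B) * K + Q ≤ 0) :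
    X * (A - B * K) + (A - B * K)ᴴ * X ≤ 0 := by
  classical
  rw [closedLoop_lyapunov_eq hX hK]
  exact sub_nonpos.2 (hric.trans (hPi.conjTranspose_mul_mul_same _).nonneg)

theorem stmt_13_general [DecidableEq m] [DecidableEq n] {A Q X : Matrix n n 𝕜}
    {B S : Matrix n m 𝕜} {R Rd : Matrix m m 𝕜} (hPi : (fromBlocks Q S Sᴴ R).PosSemidef)
    (hRd : R * Rd * R = R) (hX : X.IsHermitian)
    (hric : X * A + Aᴴ * X - (S + X * B) * Rd * (S + X * B)ᴴ + Q ≤ 0)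
    (hker : ∀ v, R *ᵥ v = 0 → (S + X * B) *ᵥ v = 0) (k : ℕ) :
    X * (A - B * (Rd * (S + X * B)ᴴ)) ^ k * (B * (1 - Rd * R)) = 0 := by
  have hR : R.IsHermitian := (isHermitian_fromBlocks_iff.1 hPi.isHermitian).2.2.2
  have hRG : R * (1 - Rd * R) = 0 := mul_one_sub_mul_eq_zero hRd
  have hSG : S * (1 - Rd * R) = 0 := mul_eq_zero_of_fromBlocks_posSemidef hPi hRG
  have hSXG : (S + X * B) * (1 - Rd * R) = 0 := mul_eq_zero_of_mulVec_eq_zero_imp hker hRG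
  have hXBG : X * (B * (1 - Rd * R)) = 0 := by
    rwa [Matrix.add_mul, hSG, zero_add, Matrix.mul_assoc] at hSXG
  have hK : R * (Rd * (S + X * B)ᴴ) = (S + X * B)ᴴ :=
    mul_mul_conjTranspose_eq_of_mul_one_sub_eq_zero hR hRd hSXG
  rw [Matrix.mul_assoc (S + X * B)] at hric
  have hlyap := closedLoop_lyapunov_le_zero hPi hX hK hric
  exact mul_pow_mul_eq_zero_of_lyapunov_le_zero hX hlyap hXBG k

end Riccati

theorem stmt_13 (n m : ℕ) (hn : 0 < n) (hm : 0 < m)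
    (A Q : Matrix (Fin n) (Fin n) ℝ) (B S : Matrix (Fin n) (Fin m) ℝ)
    (R : Matrix (Fin m) (Fin m) ℝ)
    (hPi : (Matrix.fromBlocks Q S Sᵀ R).PosSemidef)
    (Rd : Matrix (Fin m) (Fin m) ℝ)
    (hRd1 : R * Rd * R = R) (hRd2 : Rd * R * Rd = Rd)
    (hRd3 : (R * Rd)ᵀ = R * Rd) (hRd4 : (Rd * R)ᵀ = Rd * R)
    (X : Matrix (Fin n) (Fin n) ℝ) (hX : Xᵀ = X)
    (hgcare : X * A + Aᵀ * X - (S + X * B) * Rd * (S + X * B)ᵀ + Q = 0)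
    (hker : ∀ v : Fin m → ℝ, R.mulVec v = 0 → (S + X * B).mulVec v = 0) :
    ∀ k : ℕ,
      X * (A - B * (Rd * (S + X * B)ᵀ)) ^ k *
        (B * ((1 : Matrix (Fin m) (Fin m) ℝ) - Rd * R)) = 0 := by
  open scoped MatrixOrder in
  exact stmt_13_general (S := S) hPi hRd1 hX hgcare.le hker
end

section
/- (𝓡_{0,X} is independent of X.) Let X be a symmetric solution of CGCARE(Σ) and set F = A − B R† Sᵀ. Then for every natural number k one has A_X^k · (B G) = F^k · (B G). Consequently the reachable subspace 𝓡_{0,X} of the pair (A_X, B G), namely the column span of [ B G | A_X B G | … | A_X^{n−1} B G ], equals the column span of [ B G | F B G | … | F^{n−1} B G ], which does not depend on the solution X. -/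
/-!
Write `F = A - B R† Sᴴ`, so that `A_X = F - B R† Bᴴ X`, and `G = 1 - R† R`. The two matrices generate
the same powers on `B G` as soon as `X F ^ k B G = 0` for all `k`.

For `k = 0`, positivity of the Popov matrix gives `ker R ⊆ ker S`, so `ker R ⊆ ker (S + X B)` yields
`X B G = 0`. The induction step is the `F`-invariance of `ker X`. The Riccati equation reads
`X F + M X + C = 0` with `C = Q - S R† Sᴴ` and some matrix `M`. If `X v = 0`, pairing
`X F v + C v = 0` with `v` gives `vᴴ C v = 0`. Since `C` is the congruence transform of the Popov
matrix by the block column `(1, -R† Sᴴ)`, it is positive semidefinite, whence `C v = 0` and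
therefore `X F v = 0`.
-/

open Matrix

section Reachability

variable {n m p α : Type*} [Fintype n] [DecidableEq n]

/-- The reachable subspace of the pair `(A, B)`: the column span of the Kalman matrix
`[B | A B | … | A ^ (n - 1) B]`, where `n` is the order of `A`. -/
def reachableSubspace [Semiring α] (A : Matrix n n α) (B : Matrix n m α) :
    Submodule α (n → α) :=
  Submodule.span α (⋃ k < Fintype.card n, Set.range (A ^ k * B).col)

lemma reachableSubspace_congr [Semiring α] {A A' : Matrix n n α} {B B' : Matrix n m α}
    (h : ∀ k, A ^ k * B = A' ^ k * B') : reachableSubspace A B = reachableSubspace A' B' := by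
  simp only [reachableSubspace, h]

lemma mul_pow_mul_eq_zero_of_invariant [Semiring α] {F : Matrix n n α} {X : Matrix p n α}
    (hinv : ∀ W : Matrix n m α, X * W = 0 → X * (F * W) = 0) {W : Matrix n m α} (hW : X * W = 0)
    (k : ℕ) : X * (F ^ k * W) = 0 := by
  induction k with
  | zero => rwa [pow_zero, Matrix.one_mul]
  | succ k ih => rw [pow_succ', Matrix.mul_assoc]; exact hinv _ ih

lemma sub_mul_pow_mul_eq [Fintype p] [Ring α] {F : Matrix n n α} {X : Matrix p n α}
    {W : Matrix n m α} (hXW : ∀ k : ℕ, X * (F ^ k * W) = 0) (N : Matrix n p α) (k : ℕ) :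
    (F - N * X) ^ k * W = F ^ k * W := by
  induction k with
  | zero => simp only [pow_zero]
  | succ k ih =>
    rw [pow_succ', Matrix.mul_assoc, ih, Matrix.sub_mul, Matrix.mul_assoc N, hXW, Matrix.mul_zero,
      sub_zero, pow_succ', Matrix.mul_assoc]

end Reachability

lemma mul_eq_zero_of_ker_le {l m p q α : Type*} [Fintype m] [NonUnitalNonAssocSemiring α]
    {R : Matrix l m α} {T : Matrix q m α} (hker : ∀ v, R *ᵥ v = 0 → T *ᵥ v = 0)
    {W : Matrix m p α} (hW : R * W = 0) : T * W = 0 :=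
  ext_col fun j => hker (W.col j) congr(($hW).col j)

section Riccati

open scoped ComplexOrder

variable {n m p 𝕜 : Type*} [Fintype m] [RCLike 𝕜]

lemma mul_eq_zero_of_conjTranspose_mul_mul_eq_zero {P : Matrix m m 𝕜} (hP : P.PosSemidef)
    {W : Matrix m p 𝕜} (hW : Wᴴ * (P * W) = 0) : P * W = 0 :=
  ext_col fun j => (hP.dotProduct_mulVec_zero_iff (W.col j)).1 congr($hW j j)

variable {Q : Matrix n n 𝕜} {S : Matrix n m 𝕜} {R Rd : Matrix m m 𝕜}

lemma mul_eq_zero_of_posSemidef_fromBlocks [Finite n] (hPi : (fromBlocks Q S Sᴴ R).PosSemidef)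
    {W : Matrix m p 𝕜} (hW : R * W = 0) : S * W = 0 := by
  cases nonempty_fintype n
  have hPiW : fromBlocks Q S Sᴴ R * fromRows (0 : Matrix n p 𝕜) W = fromRows (S * W) 0 := by
    simp only [fromBlocks_mul_fromRows, Matrix.mul_zero, zero_add, hW]
  have hzero : fromRows (S * W) (0 : Matrix m p 𝕜) = 0 := by
    rw [← hPiW]
    apply mul_eq_zero_of_conjTranspose_mul_mul_eq_zero hPi
    rw [hPiW, conjTranspose_fromRows_eq_fromCols_conjTranspose, fromCols_mul_fromRows,
      conjTranspose_zero, Matrix.zero_mul, Matrix.mul_zero, add_zero]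
  exact (fromRows_inj (hzero.trans fromRows_zero.symm)).1

lemma mul_innerInverse_mul_conjTranspose [Finite n] (hPi : (fromBlocks Q S Sᴴ R).PosSemidef)
    (hRd : R * Rd * R = R) : R * (Rd * Sᴴ) = Sᴴ := by
  classical
  have hR : Rᴴ = R := (isHermitian_fromBlocks_iff.1 hPi.isHermitian).2.2.2
  have hRdH : R * (1 - Rdᴴ * R) = 0 := by
    have hadj := congr(($hRd)ᴴ)
    simp only [conjTranspose_mul, hR] at hadj
    rw [Matrix.mul_sub, Matrix.mul_one, hadj, sub_self]
  have hS : S = S * (Rdᴴ * R) := by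
    simpa only [Matrix.mul_sub, Matrix.mul_one, sub_eq_zero] using
      mul_eq_zero_of_posSemidef_fromBlocks hPi hRdH
  simpa only [conjTranspose_mul, conjTranspose_conjTranspose, hR, Matrix.mul_assoc]
    using congr(($hS)ᴴ).symm

lemma posSemidef_schurComplement_of_innerInverse [Finite n] (hPi : (fromBlocks Q S Sᴴ R).PosSemidef)
    (hRd : R * Rd * R = R) : (Q - S * Rd * Sᴴ).PosSemidef := by
  classical
  cases nonempty_fintype n
  let V : Matrix (n ⊕ m) n 𝕜 := fromRows 1 (-(Rd * Sᴴ))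
  have hPiV : fromBlocks Q S Sᴴ R * V = fromRows (Q - S * Rd * Sᴴ) 0 := by
    simp only [V, fromBlocks_mul_fromRows, Matrix.mul_one, Matrix.mul_neg,
      mul_innerInverse_mul_conjTranspose hPi hRd, ← sub_eq_add_neg, sub_self, Matrix.mul_assoc]
  have hVPiV : Vᴴ * fromBlocks Q S Sᴴ R * V = Q - S * Rd * Sᴴ := by
    rw [Matrix.mul_assoc, hPiV, conjTranspose_fromRows_eq_fromCols_conjTranspose,
      fromCols_mul_fromRows, conjTranspose_one, Matrix.one_mul, Matrix.mul_zero, add_zero]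
  exact hVPiV ▸ hPi.conjTranspose_mul_mul_same V

variable [Fintype n]

lemma mul_mul_eq_zero_of_riccati {X F M C : Matrix n n 𝕜} (hX : X.IsHermitian)
    (hC : C.PosSemidef) (hric : X * F + M * X + C = 0) {W : Matrix n p 𝕜} (hW : X * W = 0) :
    X * (F * W) = 0 := by
  have hsum : X * (F * W) + C * W = 0 := by
    simpa only [Matrix.add_mul, Matrix.mul_assoc, hW, Matrix.mul_zero, add_zero, Matrix.zero_mul]
      using congr($hric * W)
  have hWX : Wᴴ * X = 0 := by
    simpa only [conjTranspose_mul, hX.eq, conjTranspose_zero] using congr(($hW)ᴴ)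
  have hWCW : Wᴴ * (C * W) = 0 := by
    simpa only [Matrix.mul_add, ← Matrix.mul_assoc, hWX, Matrix.zero_mul, zero_add,
      Matrix.mul_zero] using congr(Wᴴ * $hsum)
  rwa [mul_eq_zero_of_conjTranspose_mul_mul_eq_zero hC hWCW, add_zero] at hsum

variable {A X : Matrix n n 𝕜} {B : Matrix n m 𝕜}

lemma closedLoop_eq_sub_mul (hX : X.IsHermitian) :
    A - B * (Rd * (S + X * B)ᴴ) = (A - B * (Rd * Sᴴ)) - B * (Rd * Bᴴ) * X := by
  rw [conjTranspose_add, conjTranspose_mul, hX.eq]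
  simp only [Matrix.mul_add, Matrix.mul_assoc]
  abel

lemma riccati_residual_eq (hX : X.IsHermitian) :
    X * A + Aᴴ * X - (S + X * B) * Rd * (S + X * B)ᴴ + Q =
      X * (A - B * (Rd * Sᴴ)) + (Aᴴ - (S + X * B) * Rd * Bᴴ) * X + (Q - S * Rd * Sᴴ) := by
  rw [conjTranspose_add, conjTranspose_mul, hX.eq]
  simp only [Matrix.mul_add, Matrix.add_mul, Matrix.mul_sub, Matrix.sub_mul, Matrix.mul_assoc]
  abel

theorem stmt_14_general [DecidableEq n] [DecidableEq m]
    (hPi : (fromBlocks Q S Sᴴ R).PosSemidef) (hRd : R * Rd * R = R) (hX : X.IsHermitian)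
    (hgcare : X * A + Aᴴ * X - (S + X * B) * Rd * (S + X * B)ᴴ + Q = 0)
    (hker : ∀ v, R *ᵥ v = 0 → (S + X * B) *ᵥ v = 0) :
    (∀ k : ℕ, (A - B * (Rd * (S + X * B)ᴴ)) ^ k * (B * (1 - Rd * R)) =
      (A - B * (Rd * Sᴴ)) ^ k * (B * (1 - Rd * R))) ∧
    reachableSubspace (A - B * (Rd * (S + X * B)ᴴ)) (B * (1 - Rd * R)) =
      reachableSubspace (A - B * (Rd * Sᴴ)) (B * (1 - Rd * R)) := by
  have hRG : R * (1 - Rd * R) = 0 := by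
    rw [Matrix.mul_sub, Matrix.mul_one, ← Matrix.mul_assoc, hRd, sub_self]
  have hXBG : X * (B * (1 - Rd * R)) = 0 := by
    simpa only [Matrix.add_mul, mul_eq_zero_of_posSemidef_fromBlocks hPi hRG, zero_add,
      Matrix.mul_assoc] using mul_eq_zero_of_ker_le hker hRG
  rw [riccati_residual_eq hX] at hgcare
  have hXFBG : ∀ k : ℕ, X * ((A - B * (Rd * Sᴴ)) ^ k * (B * (1 - Rd * R))) = 0 :=
    mul_pow_mul_eq_zero_of_invariant (fun _ => mul_mul_eq_zero_of_riccati hX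
      (posSemidef_schurComplement_of_innerInverse hPi hRd) hgcare) hXBG
  have hpow := sub_mul_pow_mul_eq hXFBG (B * (Rd * Bᴴ))
  rw [← closedLoop_eq_sub_mul hX] at hpow
  exact ⟨hpow, reachableSubspace_congr hpow⟩

end Riccati

theorem stmt_14 (n m : ℕ) (hn : 0 < n) (hm : 0 < m)
    (A Q : Matrix (Fin n) (Fin n) ℝ) (B S : Matrix (Fin n) (Fin m) ℝ)
    (R : Matrix (Fin m) (Fin m) ℝ)
    (hPi : (Matrix.fromBlocks Q S Sᵀ R).PosSemidef)
    (Rd : Matrix (Fin m) (Fin m) ℝ)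
    (hRd1 : R * Rd * R = R) (hRd2 : Rd * R * Rd = Rd)
    (hRd3 : (R * Rd)ᵀ = R * Rd) (hRd4 : (Rd * R)ᵀ = Rd * R)
    (X : Matrix (Fin n) (Fin n) ℝ) (hX : Xᵀ = X)
    (hgcare : X * A + Aᵀ * X - (S + X * B) * Rd * (S + X * B)ᵀ + Q = 0)
    (hker : ∀ v : Fin m → ℝ, R.mulVec v = 0 → (S + X * B).mulVec v = 0) :
    (∀ k : ℕ,
      (A - B * (Rd * (S + X * B)ᵀ)) ^ k * (B * ((1 : Matrix (Fin m) (Fin m) ℝ) - Rd * R)) =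
      (A - B * (Rd * Sᵀ)) ^ k * (B * ((1 : Matrix (Fin m) (Fin m) ℝ) - Rd * R))) ∧
    Submodule.span ℝ (⋃ k < n, Set.range fun j : Fin m =>
        fun i : Fin n => ((A - B * (Rd * (S + X * B)ᵀ)) ^ k *
          (B * ((1 : Matrix (Fin m) (Fin m) ℝ) - Rd * R))) i j) =
      Submodule.span ℝ (⋃ k < n, Set.range fun j : Fin m =>
        fun i : Fin n => ((A - B * (Rd * Sᵀ)) ^ k *
          (B * ((1 : Matrix (Fin m) (Fin m) ℝ) - Rd * R))) i j) := by
  simp only [← conjTranspose_eq_transpose_of_trivial] at hPi hgcare hX ⊢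
  simpa only [reachableSubspace, Fintype.card_fin] using!
    stmt_14_general hPi hRd1 hX hgcare hker
end

section
/- (𝓡_{0,X} equals the reachability subspace on ker X.) Let X be a symmetric solution of CGCARE(Σ). Then B·(ker D) ⊆ ker X, and the smallest A_X-invariant subspace of ℝ^n containing B·(ker D) equals the smallest A_X-invariant subspace of ℝ^n containing (ker X) ∩ B·(ker D); moreover both equal the column span of [ B G | A_X B G | … | A_X^{n−1} B G ]. (Here B·(ker D) = { B u : u ∈ ℝ^m, D u = 0 }.) -/
open Matrix

/-!
If `u ∈ ker D`, then `R u = Dᵀ D u = 0`, so `(S + X B) u = 0`; as `S u = Cᵀ D u = 0`, this leaves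
`X B u = 0`. Hence `B (ker D) ⊆ ker X`, and intersecting `B (ker D)` with `ker X` changes nothing.

For the column span, `ker D = ker R` is the range of `G = 1 - R† R`, so `B (ker D)` is the column
space of `B G`. For any square `F`, such as `A_X`, the smallest `F`-invariant subspace containing it
is the sum of its images under all powers of `F`, and by Cayley–Hamilton the powers below the
dimension suffice.
-/

section InvariantHull

variable {R M : Type*}

/-- The smallest `f`-invariant submodule containing `V`. When `f` is the state matrix of a linear
system and `V` the range of its input matrix, this is the reachability subspace. -/
def invariantHull [Semiring R] [AddCommMonoid M] [Module R M] (f : Module.End R M)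
    (V : Submodule R M) : Submodule R M :=
  sInf {W | V ≤ W ∧ ∀ v ∈ W, f v ∈ W}

lemma invariantHull_eq_iSup_map_pow [Semiring R] [AddCommMonoid M] [Module R M]
    (f : Module.End R M) (V : Submodule R M) :
    invariantHull f V = ⨆ k : ℕ, V.map (f ^ k) := by
  apply le_antisymm
  · refine sInf_le ⟨?_, fun v hv => ?_⟩
    · simpa [Module.End.one_eq_id] using le_iSup (fun k : ℕ => V.map (f ^ k)) 0
    · have hinv : (⨆ k : ℕ, V.map (f ^ k)).map f ≤ ⨆ k : ℕ, V.map (f ^ k) := by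
        simp only [Submodule.map_iSup, ← Submodule.map_comp, ← Module.End.mul_eq_comp, ← pow_succ']
        exact iSup_le fun k => le_iSup (fun k : ℕ => V.map (f ^ k)) (k + 1)
      exact hinv (Submodule.mem_map_of_mem hv)
  · refine le_sInf fun W ⟨hVW, hW⟩ => iSup_le fun k => ?_
    rintro _ ⟨v, hv, rfl⟩
    have hiter : Set.MapsTo (f^[k]) W W := Set.MapsTo.iterate hW k
    simpa [Module.End.pow_apply] using hiter (hVW hv)

lemma map_aeval_le_iSup_map_pow [CommSemiring R] [AddCommMonoid M] [Module R M]
    (f : Module.End R M) (V : Submodule R M) {r : Polynomial R} {d : ℕ} (hr : r.degree < d) :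
    V.map (Polynomial.aeval f r) ≤ ⨆ k < d, V.map (f ^ k) := by
  rintro _ ⟨v, hv, rfl⟩
  rw [Polynomial.aeval_eq_sum_range, LinearMap.sum_apply]
  refine Submodule.sum_mem _ fun k _ => ?_
  by_cases hk : k < d
  · exact Submodule.smul_mem _ _
      (Submodule.mem_iSup_of_mem k (Submodule.mem_iSup_of_mem hk (Submodule.mem_map_of_mem hv)))
  · have hcoeff : r.coeff k = 0 :=
      Polynomial.coeff_eq_zero_of_degree_lt (hr.trans_le (by exact_mod_cast not_lt.1 hk))
    simp [hcoeff]

lemma invariantHull_eq_iSup_map_pow_lt [CommRing R] [AddCommGroup M] [Module R M]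
    (f : Module.End R M) (V : Submodule R M) {q : Polynomial R} (hq : q.Monic)
    (hf : Polynomial.aeval f q = 0) :
    invariantHull f V = ⨆ k < q.natDegree, V.map (f ^ k) := by
  nontriviality R
  rw [invariantHull_eq_iSup_map_pow]
  refine le_antisymm (iSup_le fun k => ?_) (iSup₂_le_iSup _ _)
  have hpow : f ^ k = Polynomial.aeval f (Polynomial.X ^ k %ₘ q) := by
    rw [Polynomial.aeval_modByMonic_eq_self_of_root hf, map_pow, Polynomial.aeval_X]
  rw [hpow]
  refine map_aeval_le_iSup_map_pow f V ?_
  rw [← Polynomial.degree_eq_natDegree hq.ne_zero]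
  exact Polynomial.degree_modByMonic_lt _ hq

end InvariantHull

section Matrices

variable {l m n o p 𝕜 : Type*} [Fintype m]

section Semiring

variable [CommSemiring 𝕜]

lemma map_ker_mulVecLin_le_iff {D : Matrix p m 𝕜} {B : Matrix n m 𝕜}
    {W : Submodule 𝕜 (n → 𝕜)} :
    (LinearMap.ker D.mulVecLin).map B.mulVecLin ≤ W ↔ ∀ u, D *ᵥ u = 0 → B *ᵥ u ∈ W :=
  Submodule.map_le_iff_le_comap

variable [Fintype n]

lemma ker_inf_map_ker_mulVecLin_le_iff {X : Matrix l n 𝕜} {D : Matrix p m 𝕜}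
    {B : Matrix n m 𝕜} {W : Submodule 𝕜 (n → 𝕜)} :
    LinearMap.ker X.mulVecLin ⊓ (LinearMap.ker D.mulVecLin).map B.mulVecLin ≤ W ↔
      ∀ x, X *ᵥ x = 0 → (∃ u, D *ᵥ u = 0 ∧ x = B *ᵥ u) → x ∈ W := by
  simp [SetLike.le_def, eq_comm (b := B *ᵥ _)]

lemma map_ker_mulVecLin_le_ker_of_ker_mul_le [Fintype p] {L : Matrix o p 𝕜} {E : Matrix l p 𝕜}
    {D : Matrix p m 𝕜} {X : Matrix l n 𝕜} {B : Matrix n m 𝕜}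
    (h : LinearMap.ker (L * D).mulVecLin ≤ LinearMap.ker (E * D + X * B).mulVecLin) :
    (LinearMap.ker D.mulVecLin).map B.mulVecLin ≤ LinearMap.ker X.mulVecLin := by
  rintro _ ⟨u, hu, rfl⟩
  have hDu : D *ᵥ u = 0 := hu
  have hsum : (E * D + X * B) *ᵥ u = 0 := h (by
    rw [LinearMap.mem_ker, mulVecLin_apply, ← mulVec_mulVec, hDu, mulVec_zero])
  rwa [add_mulVec, ← mulVec_mulVec, hDu, mulVec_zero, zero_add, ← mulVec_mulVec] at hsum

end Semiring

variable [CommRing 𝕜]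

lemma ker_mulVecLin_eq_range_one_sub_mul [DecidableEq m] [Fintype p] {R : Matrix p m 𝕜}
    {Rd : Matrix m p 𝕜} (hRd : R * Rd * R = R) :
    LinearMap.ker R.mulVecLin = LinearMap.range (1 - Rd * R).mulVecLin := by
  apply le_antisymm
  · intro u hu
    have hu : R *ᵥ u = 0 := hu
    refine ⟨u, ?_⟩
    rw [mulVecLin_apply, sub_mulVec, one_mulVec, ← mulVec_mulVec, hu, mulVec_zero, sub_zero]
  · rintro _ ⟨u, rfl⟩
    have hann : R * (1 - Rd * R) = 0 := by
      rw [Matrix.mul_sub, Matrix.mul_one, ← Matrix.mul_assoc, hRd, sub_self]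
    rw [LinearMap.mem_ker, mulVecLin_apply, mulVecLin_apply, mulVec_mulVec, hann, zero_mulVec]

variable [Fintype n]

lemma invariantHull_range_mulVecLin [DecidableEq n] (F : Matrix n n 𝕜) (N : Matrix n m 𝕜) :
    invariantHull F.mulVecLin (LinearMap.range N.mulVecLin) =
      Submodule.span 𝕜 (⋃ k < Fintype.card n, Set.range (F ^ k * N).col) := by
  nontriviality 𝕜
  have hcayley : Polynomial.aeval F.mulVecLin F.charpoly = 0 := by
    have h := Polynomial.aeval_algHom_apply (toLinAlgEquiv' : Matrix n n 𝕜 ≃ₐ[𝕜] _) F F.charpoly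
    rwa [F.aeval_self_charpoly, map_zero] at h
  rw [invariantHull_eq_iSup_map_pow_lt _ _ F.charpoly_monic hcayley, F.charpoly_natDegree_eq_dim,
    Submodule.span_iUnion₂]
  refine iSup_congr fun k => iSup_congr fun _ => ?_
  rw [← range_mulVecLin, mulVecLin_mul, LinearMap.range_comp, ← toLin'_apply' F, ← toLin'_pow,
    toLin'_apply']

theorem stmt_16_general [Fintype p] [DecidableEq m] [DecidableEq n] [NoZeroDivisors 𝕜]
    [PartialOrder 𝕜] [StarRing 𝕜] [StarOrderedRing 𝕜]
    (F X : Matrix n n 𝕜) (B S : Matrix n m 𝕜) (R Rd : Matrix m m 𝕜)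
    (C : Matrix p n 𝕜) (D : Matrix p m 𝕜) (hS : S = Cᴴ * D) (hR : R = Dᴴ * D)
    (hRd : R * Rd * R = R)
    (hker : LinearMap.ker R.mulVecLin ≤ LinearMap.ker (S + X * B).mulVecLin) :
    (LinearMap.ker D.mulVecLin).map B.mulVecLin ≤ LinearMap.ker X.mulVecLin ∧
    invariantHull F.mulVecLin ((LinearMap.ker D.mulVecLin).map B.mulVecLin) =
      invariantHull F.mulVecLin
        (LinearMap.ker X.mulVecLin ⊓ (LinearMap.ker D.mulVecLin).map B.mulVecLin) ∧
    invariantHull F.mulVecLin ((LinearMap.ker D.mulVecLin).map B.mulVecLin) =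
      Submodule.span 𝕜 (⋃ k < Fintype.card n, Set.range (F ^ k * (B * (1 - Rd * R))).col) := by
  have hXB : (LinearMap.ker D.mulVecLin).map B.mulVecLin ≤ LinearMap.ker X.mulVecLin :=
    map_ker_mulVecLin_le_ker_of_ker_mul_le (by rwa [← hR, ← hS])
  have hDR : LinearMap.ker D.mulVecLin = LinearMap.ker R.mulVecLin := by
    ext u
    simp [hR, conjTranspose_mul_self_mulVec_eq_zero]
  refine ⟨hXB, by rw [inf_eq_right.2 hXB], ?_⟩
  rw [hDR, ker_mulVecLin_eq_range_one_sub_mul hRd, ← LinearMap.range_comp, ← mulVecLin_mul,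
    invariantHull_range_mulVecLin]

end Matrices

theorem stmt_16 (n m p : ℕ) (hn : 0 < n) (hm : 0 < m) (hp : 0 < p)
    (A Q : Matrix (Fin n) (Fin n) ℝ) (B S : Matrix (Fin n) (Fin m) ℝ)
    (R : Matrix (Fin m) (Fin m) ℝ)
    (hPi : (Matrix.fromBlocks Q S Sᵀ R).PosSemidef)
    (C : Matrix (Fin p) (Fin n) ℝ) (D : Matrix (Fin p) (Fin m) ℝ)
    (hQ : Q = Cᵀ * C) (hS : S = Cᵀ * D) (hR : R = Dᵀ * D)
    (Rd : Matrix (Fin m) (Fin m) ℝ)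
    (hRd1 : R * Rd * R = R) (hRd2 : Rd * R * Rd = Rd)
    (hRd3 : (R * Rd)ᵀ = R * Rd) (hRd4 : (Rd * R)ᵀ = Rd * R)
    (X : Matrix (Fin n) (Fin n) ℝ) (hX : Xᵀ = X)
    (hgcare : X * A + Aᵀ * X - (S + X * B) * Rd * (S + X * B)ᵀ + Q = 0)
    (hker : ∀ v : Fin m → ℝ, R.mulVec v = 0 → (S + X * B).mulVec v = 0) :
    (∀ u : Fin m → ℝ, D.mulVec u = 0 → X.mulVec (B.mulVec u) = 0) ∧
    sInf {W : Submodule ℝ (Fin n → ℝ) |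
        (∀ u : Fin m → ℝ, D.mulVec u = 0 → B.mulVec u ∈ W) ∧
        (∀ v ∈ W, (A - B * (Rd * (S + X * B)ᵀ)).mulVec v ∈ W)} =
      sInf {W : Submodule ℝ (Fin n → ℝ) |
        (∀ x : Fin n → ℝ, X.mulVec x = 0 →
          (∃ u : Fin m → ℝ, D.mulVec u = 0 ∧ x = B.mulVec u) → x ∈ W) ∧
        (∀ v ∈ W, (A - B * (Rd * (S + X * B)ᵀ)).mulVec v ∈ W)} ∧
    sInf {W : Submodule ℝ (Fin n → ℝ) |
        (∀ u : Fin m → ℝ, D.mulVec u = 0 → B.mulVec u ∈ W) ∧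
        (∀ v ∈ W, (A - B * (Rd * (S + X * B)ᵀ)).mulVec v ∈ W)} =
      Submodule.span ℝ (⋃ k < n, Set.range fun j : Fin m =>
        fun i : Fin n => ((A - B * (Rd * (S + X * B)ᵀ)) ^ k *
          (B * ((1 : Matrix (Fin m) (Fin m) ℝ) - Rd * R))) i j) := by
  simpa only [invariantHull, map_ker_mulVecLin_le_iff, ker_inf_map_ker_mulVecLin_le_iff,
    LinearMap.mem_ker, mulVecLin_apply, Fintype.card_fin] using!
    stmt_16_general (A - B * (Rd * (S + X * B)ᵀ)) X B S R Rd C D hS hR hRd1 hker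
end
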